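/- arXiv:2210.00679 — 3 statements merged into one kernel-verified Lean document; each statement's English description precedes it below -/
import Mathlib

section
/- Let σ, η > 0, let T ≥ 1 be an integer, let C = 6σ²η²(T+1), and define a sequence of reals by w_{T+1} = 1/(2C) and, for t from T down to 1, w_t = w_{t+1} + 6σ²η²·w_{t+1}². Then for every 1 ≤ t ≤ T+1, w_t ≤ 1/(C + 6σ²η²t). Consequently, the sequence satisfies w_t ≥ w_{t+1} + 6σ²η²w_{t+1}² for 1 ≤ t ≤ T, w_{t+1}η² ≤ 1/(6σ²(T+1)) ≤ 1/(4σ²) for 1 ≤ t ≤ T, and 1/(2C) ≤ w_t ≤ 1/C for all 1 ≤ t ≤ T+1. -/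
/-!
Write `a = 6σ²η²`. Reciprocals linearize the recurrence: since `(1 + ax)(1 - ax) ≤ 1`, a step
`x ↦ x + ax²` lowers `1/x` by at most `a`. As `1/w_{T+1} = 2C = C + a(T+1)`, going back to time `t`
leaves `1/w_t ≥ C + at`, while `w_t` only grows on the way back.
-/

section QuadraticRecurrence

variable {R : Type*} [CommRing R] [LinearOrder R] [IsOrderedRing R]
  {a b : R} {m n : ℕ} {w : ℕ → R}

theorem add_mul_sq_mul_le_one {x y : R} (hax : 0 ≤ 1 + a * x) (hxy : x * (y + a) ≤ 1) :
    (x + a * x ^ 2) * y ≤ 1 := by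
  have hxy' : x * y ≤ 1 - a * x := by linear_combination hxy
  calc (x + a * x ^ 2) * y
      = (1 + a * x) * (x * y) := by ring
    _ ≤ (1 + a * x) * (1 - a * x) := mul_le_mul_of_nonneg_left hxy' hax
    _ = 1 - (a * x) ^ 2 := by ring
    _ ≤ 1 := sub_le_self 1 (sq_nonneg (a * x))

theorem antitoneOn_Icc_of_add_mul_sq_le (ha : 0 ≤ a)
    (hw : ∀ t, m ≤ t → t < n → w (t + 1) + a * w (t + 1) ^ 2 ≤ w t) :
    AntitoneOn w (Set.Icc m n) := by
  refine antitoneOn_of_succ_le Set.ordConnected_Icc fun t _ ht ht_succ => ?_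
  calc w (t + 1)
      ≤ w (t + 1) + a * w (t + 1) ^ 2 := le_add_of_nonneg_right (mul_nonneg ha (sq_nonneg _))
    _ ≤ w t := hw t ht.1 (Nat.lt_of_succ_le ht_succ.2)

theorem mul_add_mul_natCast_le_one_of_eq_add_mul_sq (hmn : m ≤ n)
    (hw_factor : ∀ t, m < t → t ≤ n → 0 ≤ 1 + a * w t)
    (hw : ∀ t, m ≤ t → t < n → w t = w (t + 1) + a * w (t + 1) ^ 2)
    (hw_last : w n * (b + a * n) ≤ 1) : w m * (b + a * m) ≤ 1 := by
  refine Nat.decreasingInduction' (P := fun t => w t * (b + a * t) ≤ 1) ?_ hmn hw_last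
  intro t htn hmt hw_succ
  have hw_succ' : w (t + 1) * (b + a * t + a) ≤ 1 := by
    push_cast at hw_succ
    linear_combination hw_succ
  rw [hw t hmt htn]
  exact add_mul_sq_mul_le_one (hw_factor (t + 1) (Nat.lt_succ_of_le hmt) htn) hw_succ'

end QuadraticRecurrence

section QuadraticRecurrenceBounds

variable {K : Type*} [Field K] [LinearOrder K] [IsStrictOrderedRing K]

theorem one_div_le_and_le_one_div_of_eq_add_mul_sq {a b : K} {m n : ℕ} {w : ℕ → K}
    (ha : 0 ≤ a) (hb : 0 < b + a * m) (hmn : m ≤ n)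
    (hw_last : w n = 1 / (b + a * n))
    (hw : ∀ t, m ≤ t → t < n → w t = w (t + 1) + a * w (t + 1) ^ 2) :
    1 / (b + a * n) ≤ w m ∧ w m ≤ 1 / (b + a * m) := by
  have hb_last : 0 < b + a * n := hb.trans_le (by gcongr)
  have hw_anti : AntitoneOn w (Set.Icc m n) :=
    antitoneOn_Icc_of_add_mul_sq_le ha fun t hmt htn => (hw t hmt htn).ge
  have hw_lower (t : ℕ) (hmt : m ≤ t) (htn : t ≤ n) : 1 / (b + a * n) ≤ w t :=
    hw_last ▸ hw_anti ⟨hmt, htn⟩ ⟨hmn, le_rfl⟩ htn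
  have hw_factor (t : ℕ) (hmt : m < t) (htn : t ≤ n) : 0 ≤ 1 + a * w t := by
    have : 0 ≤ w t := (one_div_pos.2 hb_last).le.trans (hw_lower t hmt.le htn)
    positivity
  have hw_last_mul : w n * (b + a * n) ≤ 1 := by
    rw [hw_last, one_div_mul_cancel hb_last.ne']
  exact ⟨hw_lower m le_rfl hmn, (le_div_iff₀ hb).2 <|
    mul_add_mul_natCast_le_one_of_eq_add_mul_sq hmn hw_factor hw hw_last_mul⟩

theorem weights_fixed_step_general {σ η : K} (hσ : σ ≠ 0) (hη : η ≠ 0) {T : ℕ}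
    {C : K} (hC : C = 6 * σ ^ 2 * η ^ 2 * ((T : K) + 1)) {w : ℕ → K}
    (hw_last : w (T + 1) = 1 / (2 * C))
    (hw_rec : ∀ t, 1 ≤ t → t ≤ T → w t = w (t + 1) + 6 * σ ^ 2 * η ^ 2 * w (t + 1) ^ 2) :
    (∀ t, 1 ≤ t → t ≤ T + 1 → w t ≤ 1 / (C + 6 * σ ^ 2 * η ^ 2 * (t : K))) ∧
    (∀ t, 1 ≤ t → t ≤ T → w (t + 1) + 6 * σ ^ 2 * η ^ 2 * w (t + 1) ^ 2 ≤ w t) ∧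
    (∀ t, 1 ≤ t → t ≤ T →
      w (t + 1) * η ^ 2 ≤ 1 / (6 * σ ^ 2 * ((T : K) + 1)) ∧
      1 / (6 * σ ^ 2 * ((T : K) + 1)) ≤ 1 / (4 * σ ^ 2)) ∧
    (∀ t, 1 ≤ t → t ≤ T + 1 → 1 / (2 * C) ≤ w t ∧ w t ≤ 1 / C) := by
  have hC_pos : 0 < C := by rw [hC]; positivity
  have h_two_mul : 2 * C = C + 6 * σ ^ 2 * η ^ 2 * ((T + 1 : ℕ) : K) := by
    push_cast
    linear_combination hC
  have hw_bounds (t : ℕ) (ht : 1 ≤ t) (htT : t ≤ T + 1) :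
      1 / (2 * C) ≤ w t ∧ w t ≤ 1 / (C + 6 * σ ^ 2 * η ^ 2 * t) := by
    rw [h_two_mul] at hw_last ⊢
    exact one_div_le_and_le_one_div_of_eq_add_mul_sq (by positivity) (by positivity) htT hw_last
      fun s hts hsT => hw_rec s (ht.trans hts) (Nat.le_of_lt_succ hsT)
  have hw_le (t : ℕ) (ht : 1 ≤ t) (htT : t ≤ T + 1) : w t ≤ 1 / C :=
    (hw_bounds t ht htT).2.trans <|
      one_div_le_one_div_of_le hC_pos (le_add_of_nonneg_right (by positivity))
  refine ⟨fun t ht htT => (hw_bounds t ht htT).2, fun t ht htT => (hw_rec t ht htT).ge,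
    fun t _ htT => ⟨?_, ?_⟩, fun t ht htT => ⟨(hw_bounds t ht htT).1, hw_le t ht htT⟩⟩
  · calc w (t + 1) * η ^ 2
        ≤ 1 / C * η ^ 2 := by gcongr; exact hw_le (t + 1) (by lia) (by lia)
      _ = 1 / (6 * σ ^ 2 * ((T : K) + 1)) := by rw [hC]; field_simp
  · have hfour : 4 * σ ^ 2 ≤ 6 * σ ^ 2 * ((T : K) + 1) := by
      have : 0 ≤ σ ^ 2 * (T : K) := by positivity
      linarith [sq_nonneg σ]
    exact one_div_le_one_div_of_le (by positivity) hfour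

end QuadraticRecurrenceBounds

/-- Properties of the weight sequence for stochastic mirror descent with a fixed
step size. With `C = 6σ²η²(T+1)`, `w_{T+1} = 1/(2C)` and `w_t = w_{t+1} + 6σ²η² w_{t+1}²`
(backwards for `t = T, …, 1`), we have `w_t ≤ 1/(C + 6σ²η²t)` for `1 ≤ t ≤ T+1`; consequently
`w_t ≥ w_{t+1} + 6σ²η² w_{t+1}²`, `w_{t+1} η² ≤ 1/(6σ²(T+1)) ≤ 1/(4σ²)` for `1 ≤ t ≤ T`, and
`1/(2C) ≤ w_t ≤ 1/C` for all `1 ≤ t ≤ T+1`. -/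
theorem weights_fixed_step (σ η : ℝ) (hσ : 0 < σ) (hη : 0 < η) (T : ℕ) (hT : 1 ≤ T)
    (C : ℝ) (hC : C = 6 * σ ^ 2 * η ^ 2 * ((T : ℝ) + 1))
    (w : ℕ → ℝ)
    (hw_last : w (T + 1) = 1 / (2 * C))
    (hw_rec : ∀ t, 1 ≤ t → t ≤ T → w t = w (t + 1) + 6 * σ ^ 2 * η ^ 2 * w (t + 1) ^ 2) :
    (∀ t, 1 ≤ t → t ≤ T + 1 → w t ≤ 1 / (C + 6 * σ ^ 2 * η ^ 2 * (t : ℝ))) ∧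
    (∀ t, 1 ≤ t → t ≤ T → w (t + 1) + 6 * σ ^ 2 * η ^ 2 * w (t + 1) ^ 2 ≤ w t) ∧
    (∀ t, 1 ≤ t → t ≤ T →
      w (t + 1) * η ^ 2 ≤ 1 / (6 * σ ^ 2 * ((T : ℝ) + 1)) ∧
      1 / (6 * σ ^ 2 * ((T : ℝ) + 1)) ≤ 1 / (4 * σ ^ 2)) ∧
    (∀ t, 1 ≤ t → t ≤ T + 1 → 1 / (2 * C) ≤ w t ∧ w t ≤ 1 / C) :=
  weights_fixed_step_general hσ.ne' hη.ne' hC hw_last hw_rec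
end

section
/- Let σ > 0, let T ≥ 1 be an integer, let η_1,…,η_T be positive step sizes, let B_t = 6σ²·Σ_{i=1}^{t−1} η_i² for 1 ≤ t ≤ T+1, and let C = B_{T+1}. Define a sequence of reals by w_{T+1} = 1/(C + B_{T+1}) = 1/(2C) and, for t from T down to 1, w_t = w_{t+1} + 6σ²η_t²·w_{t+1}². Then for every 1 ≤ t ≤ T+1, w_t ≤ 1/(C + B_t). -/
/-!
If `0 ≤ u ≤ 1 / (a + d)`, then `a * u ≤ 1 - d * u`, hence
`a * (u + d * u ^ 2) = (a * u) * (1 + d * u) ≤ 1 - (d * u) ^ 2 ≤ 1`.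
Going from index `t + 1` down to `t`, this is applied with `a = C + B t`, `a + d = C + B (t + 1)`
and `u = w (t + 1)`.
-/

section BackwardRecurrence

variable {K : Type*} [Field K] [LinearOrder K] [IsStrictOrderedRing K]

theorem add_mul_sq_le_one_div {a d u : K} (ha : 0 < a) (hd : 0 ≤ d) (hu : 0 ≤ u)
    (hua : u ≤ 1 / (a + d)) : u + d * u ^ 2 ≤ 1 / a := by
  have had : a * u ≤ 1 - d * u := by
    rw [le_div_iff₀ (by positivity)] at hua
    linarith
  rw [le_div_iff₀' ha]
  calc a * (u + d * u ^ 2) = a * u * (1 + d * u) := by ring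
    _ ≤ (1 - d * u) * (1 + d * u) := by gcongr
    _ = 1 - (d * u) ^ 2 := by ring
    _ ≤ 1 := sub_le_self 1 (sq_nonneg _)

variable {T : ℕ} {d w : ℕ → K}

theorem nonneg_of_backward_quadratic_rec (hd : ∀ t, 1 ≤ t → t ≤ T → 0 ≤ d t)
    (hw_last : 0 ≤ w (T + 1))
    (hw_rec : ∀ t, 1 ≤ t → t ≤ T → w t = w (t + 1) + d t * w (t + 1) ^ 2)
    {t : ℕ} (ht : 1 ≤ t) (htT : t ≤ T + 1) : 0 ≤ w t := by
  refine Nat.decreasingInduction' (fun k hkT htk ih ↦ ?_) htT hw_last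
  have hk : 1 ≤ k := ht.trans htk
  have hkT' : k ≤ T := Nat.le_of_lt_succ hkT
  rw [hw_rec k hk hkT']
  have := hd k hk hkT'
  positivity

theorem weights_time_varying_general {C : K} (hC : 0 < C)
    (hd : ∀ t, 1 ≤ t → t ≤ T → 0 ≤ d t)
    {B : ℕ → K} (hB : ∀ t, B t = ∑ i ∈ Finset.Ico 1 t, d i)
    (hw_last_nonneg : 0 ≤ w (T + 1)) (hw_last_le : w (T + 1) ≤ 1 / (C + B (T + 1)))
    (hw_rec : ∀ t, 1 ≤ t → t ≤ T → w t = w (t + 1) + d t * w (t + 1) ^ 2)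
    {t : ℕ} (ht : 1 ≤ t) (htT : t ≤ T + 1) : w t ≤ 1 / (C + B t) := by
  refine Nat.decreasingInduction' (fun k hkT htk ih ↦ ?_) htT hw_last_le
  have hk : 1 ≤ k := ht.trans htk
  have hkT' : k ≤ T := Nat.le_of_lt_succ hkT
  have hB_nonneg : 0 ≤ B k := by
    rw [hB]
    refine Finset.sum_nonneg fun i hi ↦ ?_
    obtain ⟨hi, hik⟩ := Finset.mem_Ico.mp hi
    exact hd i hi (hik.le.trans hkT')
  have hB_succ : B (k + 1) = B k + d k := by
    rw [hB, hB, Finset.sum_Ico_succ_top hk]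
  have hw_nonneg : 0 ≤ w (k + 1) :=
    nonneg_of_backward_quadratic_rec hd hw_last_nonneg hw_rec (Nat.le_add_left 1 k) hkT
  rw [hB_succ, ← add_assoc] at ih
  rw [hw_rec k hk hkT']
  exact add_mul_sq_le_one_div (add_pos_of_pos_of_nonneg hC hB_nonneg) (hd k hk hkT') hw_nonneg ih

end BackwardRecurrence

/-- Weight sequence for stochastic mirror descent with time-varying step sizes.
With `B_t = 6σ² ∑_{i=1}^{t-1} η_i²`, `C = B_{T+1}`, `w_{T+1} = 1/(C + B_{T+1}) = 1/(2C)`, and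
`w_t = w_{t+1} + 6σ² η_t² w_{t+1}²` (backwards for `t = T, …, 1`), we have
`w_t ≤ 1/(C + B_t)` for every `1 ≤ t ≤ T+1`. -/
theorem weights_time_varying (σ : ℝ) (hσ : 0 < σ) (T : ℕ) (hT : 1 ≤ T)
    (η : ℕ → ℝ) (hη : ∀ t, 1 ≤ t → t ≤ T → 0 < η t)
    (B : ℕ → ℝ) (hB : ∀ t, B t = 6 * σ ^ 2 * ∑ i ∈ Finset.Ico 1 t, η i ^ 2)
    (C : ℝ) (hC : C = B (T + 1))
    (w : ℕ → ℝ)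
    (hw_last : w (T + 1) = 1 / (C + B (T + 1)))
    (hw_rec : ∀ t, 1 ≤ t → t ≤ T → w t = w (t + 1) + 6 * σ ^ 2 * η t ^ 2 * w (t + 1) ^ 2) :
    ∀ t, 1 ≤ t → t ≤ T + 1 → w t ≤ 1 / (C + B t) := by
  have hη_sum : 0 < ∑ i ∈ Finset.Ico 1 (T + 1), η i ^ 2 := by
    refine Finset.sum_pos (fun i hi ↦ ?_) (Finset.nonempty_Ico.mpr (Nat.lt_succ_of_le hT))
    obtain ⟨hi, hiT⟩ := Finset.mem_Ico.mp hi
    exact pow_pos (hη i hi (Nat.le_of_lt_succ hiT)) 2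
  have hC_pos : 0 < C := by
    rw [hC, hB]
    positivity
  have hw_last_nonneg : 0 ≤ w (T + 1) := by
    rw [hw_last, ← hC]
    positivity
  intro t ht htT
  exact weights_time_varying_general hC_pos (d := fun t ↦ 6 * σ ^ 2 * η t ^ 2)
    (fun _ _ _ ↦ by positivity) (fun t ↦ by rw [hB, Finset.mul_sum])
    hw_last_nonneg hw_last.le hw_rec ht htT
end

section
/- Fix an iteration t of accelerated stochastic mirror descent. Let α_t ∈ (0,1], η_t > 0 with βα_tη_t < 1, let ĝ_t = ∇f(x_t) + ξ_t for some vector ξ_t, and suppose the iterates satisfy x_t = (1−α_t)y_{t−1} + α_t·z_{t−1}, y_t = (1−α_t)y_{t−1} + α_t·z_t, and z_t ∈ 𝒳 satisfies the first-order optimality condition ⟨η_t·ĝ_t + ∇ψ(z_t) − ∇ψ(z_{t−1}), x* − z_t⟩ ≥ 0 (i.e., z_t = argmin_{x∈𝒳}{η_t⟨ĝ_t, x⟩ + D(x, z_{t−1})}). Then (η_t/α_t)·(f(y_t) − f(x*)) − (η_t/α_t)·(1−α_t)·(f(y_{t−1}) − f(x*)) − η_t²G²/(1 − βα_tη_t)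 + D(x*, z_t) − D(x*, z_{t−1}) ≤ η_t·⟨ξ_t, x* − z_{t−1}⟩ + (η_t²/(1 − βα_tη_t))·‖ξ_t‖². -/
open scoped RealInnerProductSpace

/-!
Smoothness at `x_t` bounds `f y_t`, and convexity at `x_t` bounds the tangent plane at
`(1 - α) y_{t-1} + α x*` by `(1 - α) f y_{t-1} + α f x*`. Since
`y_t - ((1 - α) y_{t-1} + α x*) = α (z_t - x*)` and `y_t - x_t = α (z_t - z_{t-1})`, the progress
is controlled by `⟨∇f x_t, z_t - x*⟩` and `‖z_t - z_{t-1}‖`. The three-point identity turns the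
optimality of `z_t` into a bound on `⟨∇f x_t + ξ_t, z_t - x*⟩` that gains `-½‖z_t - z_{t-1}‖²`.
This absorbs the smoothness term, and the remaining `-½(1 - βαη)‖z_t - z_{t-1}‖²` absorbs, by
Young's inequality, the terms `ηG‖z_t - z_{t-1}‖` and `η‖ξ_t‖‖z_t - z_{t-1}‖`. Only the pairing of
gradients with vectors enters, so any norm will do, with gradients measured in the dual norm.
-/

lemma add_mul_le_sq_div_add_sq_div_add_mul_sq {c : ℝ} (hc : 0 < c) (a b r : ℝ) :
    (a + b) * r ≤ a ^ 2 / c + b ^ 2 / c + c / 2 * r ^ 2 := by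
  have young (t : ℝ) : t * r ≤ t ^ 2 / c + c / 4 * r ^ 2 := by
    have h := two_mul_le_add_mul_sq (a := r) (b := t) (half_pos hc)
    rw [inv_div] at h
    linear_combination h / 2
  linear_combination young a + young b

section TopologicalModule

variable {E : Type*} [AddCommGroup E] [Module ℝ E] [TopologicalSpace E]

/-- The Bregman divergence of the mirror map `ψ` with gradient `ψ'`. The gradient is an explicit
argument with values in the dual space, so that `E` need not be an inner product space. -/
def bregmanDivergence (ψ : E → ℝ) (ψ' : E → StrongDual ℝ E) (x y : E) : ℝ :=
  ψ x - ψ y - ψ' y (x - y)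

lemma bregmanDivergence_three_point (ψ : E → ℝ) (ψ' : E → StrongDual ℝ E) (x y z : E) :
    (ψ' z - ψ' y) (x - z) =
      bregmanDivergence ψ ψ' x y - bregmanDivergence ψ ψ' x z - bregmanDivergence ψ ψ' z y := by
  simp only [bregmanDivergence, sub_apply, map_sub]
  ring

lemma apply_sub_le_bregmanDivergence_of_mirror_step (ψ : E → ℝ) {ψ' : E → StrongDual ℝ E}
    {g : StrongDual ℝ E} {x y z : E} (hopt : 0 ≤ (g + ψ' z - ψ' y) (x - z)) :
    g (z - x) ≤
      bregmanDivergence ψ ψ' x y - bregmanDivergence ψ ψ' x z - bregmanDivergence ψ ψ' z y := by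
  rw [← bregmanDivergence_three_point, ← neg_sub x z, map_neg]
  rw [add_sub_assoc, add_apply] at hopt
  linarith

end TopologicalModule

lemma tangent_le_convex_combination {E : Type*} [AddCommGroup E] [Module ℝ E]
    {f : E → ℝ} {g : Module.Dual ℝ E} {x y u : E} {α : ℝ}
    (hα0 : 0 ≤ α) (hα1 : α ≤ 1) (hy : f x + g (y - x) ≤ f y) (hu : f x + g (u - x) ≤ f u) :
    f x + g ((1 - α) • y + α • u - x) ≤ (1 - α) * f y + α * f u := by
  calc f x + g ((1 - α) • y + α • u - x)
      = (1 - α) * (f x + g (y - x)) + α * (f x + g (u - x)) := by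
        simp only [map_sub, map_add, map_smul, smul_eq_mul]
        ring
    _ ≤ (1 - α) * f y + α * f u := by
        have := sub_nonneg.2 hα1
        gcongr

section NormedSpace

variable {E : Type*} [SeminormedAddCommGroup E] [NormedSpace ℝ E]

lemma linear_coupling_progress_le {f : E → ℝ} {g : Module.Dual ℝ E} {x y y' z z' u : E} {α β G : ℝ}
    (hα0 : 0 ≤ α) (hα1 : α ≤ 1)
    (hx : x = (1 - α) • y + α • z) (hy' : y' = (1 - α) • y + α • z')
    (hfy : f x + g (y - x) ≤ f y) (hfu : f x + g (u - x) ≤ f u)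
    (hfy' : f y' ≤ f x + g (y' - x) + G * ‖y' - x‖ + β / 2 * ‖y' - x‖ ^ 2) :
    f y' - f u - (1 - α) * (f y - f u) ≤
      α * (g (z' - u) + G * ‖z' - z‖ + β * α / 2 * ‖z' - z‖ ^ 2) := by
  have hnorm : ‖y' - x‖ = α * ‖z' - z‖ := by
    rw [hx, hy', add_sub_add_left_eq_sub, ← smul_sub, norm_smul, Real.norm_of_nonneg hα0]
  have hg : g (y' - x) = g ((1 - α) • y + α • u - x) + α * g (z' - u) := by
    rw [hy', ← smul_eq_mul, ← map_smul, ← map_add]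
    congr 1
    module
  rw [hnorm, hg] at hfy'
  linear_combination hfy' + tangent_le_convex_combination hα0 hα1 hfy hfu

theorem accelerated_mirror_descent_one_step_general
    {𝒳 : Set E} (h𝒳 : Convex ℝ 𝒳) {ψ f : E → ℝ} {ψ' f' : E → StrongDual ℝ E}
    (hψ : ∀ x ∈ 𝒳, ∀ y ∈ 𝒳, 1 / 2 * ‖x - y‖ ^ 2 ≤ bregmanDivergence ψ ψ' x y)
    {G β : ℝ} (hconv : ∀ x ∈ 𝒳, ∀ y ∈ 𝒳, f x + f' x (y - x) ≤ f y)
    (hsmooth : ∀ x ∈ 𝒳, ∀ y ∈ 𝒳,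
      f y ≤ f x + f' x (y - x) + G * ‖y - x‖ + β / 2 * ‖y - x‖ ^ 2)
    {α η : ℝ} (hα0 : 0 < α) (hα1 : α ≤ 1) (hη : 0 ≤ η) (hβαη : β * α * η < 1)
    {xstar ym zm xt zt yt : E} {ξ : StrongDual ℝ E}
    (hxstar : xstar ∈ 𝒳) (hym : ym ∈ 𝒳) (hzm : zm ∈ 𝒳) (hzt : zt ∈ 𝒳)
    (hxt : xt = (1 - α) • ym + α • zm) (hyt : yt = (1 - α) • ym + α • zt)
    (hopt : 0 ≤ (η • (f' xt + ξ) + ψ' zt - ψ' zm) (xstar - zt)) :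
    η / α * (f yt - f xstar) - η / α * (1 - α) * (f ym - f xstar)
        - η ^ 2 / (1 - β * α * η) * G ^ 2
        + bregmanDivergence ψ ψ' xstar zt - bregmanDivergence ψ ψ' xstar zm
      ≤ η * ξ (xstar - zm) + η ^ 2 / (1 - β * α * η) * ‖ξ‖ ^ 2 := by
  have mem_coupling {z : E} (hz : z ∈ 𝒳) : (1 - α) • ym + α • z ∈ 𝒳 :=
    h𝒳 hym hz (sub_nonneg.2 hα1) hα0.le (sub_add_cancel 1 α)
  have hxt_mem : xt ∈ 𝒳 := hxt ▸ mem_coupling hzm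
  have hyt_mem : yt ∈ 𝒳 := hyt ▸ mem_coupling hzt
  have progress : η / α * (f yt - f xstar - (1 - α) * (f ym - f xstar)) ≤
      η * (f' xt (zt - xstar) + G * ‖zt - zm‖ + β * α / 2 * ‖zt - zm‖ ^ 2) := by
    have h := mul_le_mul_of_nonneg_left
      (linear_coupling_progress_le (g := f' xt) hα0.le hα1 hxt hyt (hconv xt hxt_mem ym hym)
        (hconv xt hxt_mem xstar hxstar) (hsmooth xt hxt_mem yt hyt_mem))
      (div_nonneg hη hα0.le)
    rwa [← mul_assoc, div_mul_cancel₀ η hα0.ne'] at h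
  have mirror : η * (f' xt (zt - xstar) + ξ (zt - xstar)) ≤
      bregmanDivergence ψ ψ' xstar zm - bregmanDivergence ψ ψ' xstar zt
        - bregmanDivergence ψ ψ' zt zm :=
    apply_sub_le_bregmanDivergence_of_mirror_step ψ hopt
  have noise : ξ (zm - zt) ≤ ‖ξ‖ * ‖zt - zm‖ := by
    rw [norm_sub_rev]
    exact (le_abs_self _).trans (ξ.le_opNorm _)
  have young := add_mul_le_sq_div_add_sq_div_add_mul_sq (sub_pos.2 hβαη) (η * G) (η * ‖ξ‖) ‖zt - zm‖
  simp only [map_sub] at mirror noise progress ⊢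
  linear_combination progress + mirror + hψ zt hzt zm hzm + η * noise + young

end NormedSpace

/-- One step of accelerated stochastic mirror descent. If
`x_t = (1-α_t) y_{t-1} + α_t z_{t-1}`, `y_t = (1-α_t) y_{t-1} + α_t z_t`, and `z_t`
satisfies the first-order optimality condition of
`argmin_{x ∈ 𝒳} {η_t ⟨∇f(x_t)+ξ_t, x⟩ + D(x, z_{t-1})}`, then
`(η_t/α_t)(f(y_t) − f(x*)) − (η_t/α_t)(1-α_t)(f(y_{t-1}) − f(x*)) − η_t²G²/(1-βα_tη_t)
  + D(x*, z_t) − D(x*, z_{t-1}) ≤ η_t ⟨ξ_t, x* − z_{t-1}⟩ + (η_t²/(1-βα_tη_t)) ‖ξ_t‖²`. -/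
theorem accelerated_mirror_descent_one_step {d : ℕ}
    (𝒳 : Set (EuclideanSpace ℝ (Fin d))) (h𝒳 : Convex ℝ 𝒳)
    (ψ f : EuclideanSpace ℝ (Fin d) → ℝ)
    (gradψ gradf : EuclideanSpace ℝ (Fin d) → EuclideanSpace ℝ (Fin d))
    (D : EuclideanSpace ℝ (Fin d) → EuclideanSpace ℝ (Fin d) → ℝ)
    (hD : ∀ x y, D x y = ψ x - ψ y - ⟪gradψ y, x - y⟫)
    (hD_lb : ∀ x y, (1 / 2) * ‖x - y‖ ^ 2 ≤ D x y)
    (G β : ℝ) (hG : 0 ≤ G) (hβ : 0 ≤ β)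
    (hconv : ∀ x ∈ 𝒳, ∀ y ∈ 𝒳, f x + ⟪gradf x, y - x⟫ ≤ f y)
    (hsmooth : ∀ x ∈ 𝒳, ∀ y ∈ 𝒳,
      f y ≤ f x + ⟪gradf x, y - x⟫ + G * ‖y - x‖ + β / 2 * ‖y - x‖ ^ 2)
    (α η : ℝ) (hα0 : 0 < α) (hα1 : α ≤ 1) (hη : 0 < η) (hβαη : β * α * η < 1)
    (xstar ym zm xt zt yt ξ : EuclideanSpace ℝ (Fin d))
    (hxstar : xstar ∈ 𝒳) (hym : ym ∈ 𝒳) (hzm : zm ∈ 𝒳) (hzt : zt ∈ 𝒳)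
    (hxt : xt = (1 - α) • ym + α • zm)
    (hyt : yt = (1 - α) • ym + α • zt)
    (hopt : 0 ≤ ⟪η • (gradf xt + ξ) + gradψ zt - gradψ zm, xstar - zt⟫) :
    η / α * (f yt - f xstar) - η / α * (1 - α) * (f ym - f xstar)
        - η ^ 2 / (1 - β * α * η) * G ^ 2 + D xstar zt - D xstar zm
      ≤ η * ⟪ξ, xstar - zm⟫ + η ^ 2 / (1 - β * α * η) * ‖ξ‖ ^ 2 := by
  obtain rfl : D = bregmanDivergence ψ (fun y ↦ innerSL ℝ (gradψ y)) := by
    ext x y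
    exact hD x y
  simpa only [innerSL_apply_apply, innerSL_apply_norm] using
    accelerated_mirror_descent_one_step_general (f' := fun x ↦ innerSL ℝ (gradf x))
      (ξ := innerSL ℝ ξ) h𝒳 (fun x _ y _ ↦ hD_lb x y) hconv hsmooth hα0 hα1 hη.le hβαη
      hxstar hym hzm hzt hxt hyt (by rwa [← map_add, ← map_smul, ← map_add, ← map_sub])
end
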